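/- Cut elimination for LBV: the atomic cut rule ai↑ is admissible in LBV, that is, every structure provable in LBV ∪ {ai↑} is provable in LBV. -/

import Mathlib

/-!
Cut elimination is proved semantically, by phase semantics in the style of Okada.

Structures modulo equivalence form a commutative monoid under par, with unit `◦`.  Let `B` be the
set of classes of LBV-provable structures, and let `orth B X` be the set of `q` with `[p,q]`
provable for all `p ∈ X`.  Structures are interpreted as biorthogonally closed sets: a positive
atom `a` by `orth {a}`, a negative one by the orthogonal of this, par and copar by the usual
phase-space operations, and the unit by `B`.  Because provable structures are closed under par
(mix) and `◦` is provable, `B` is its own orthogonal, so that `◦` may serve as the unit of both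
connectives.

* Soundness (`interp_deriv`): a derivation from `P` to `Q`, even with cuts, gives
  `interp P ⊆ interp Q`.  In this model the cut just says that elements of `X` and of `orth B X`
  multiply into `B`.
* Completeness (`interp_sub`): `interp P ⊆ orth {P}`, by induction on `P`.  The copar case is
  the derivation of `[(P,Q),x,y]` from `([P,x],[Q,y])` by two switches.

If `P` is provable with cuts, then `◦ ∈ B = interp ◦ ⊆ interp P ⊆ orth {P}`, so `[P,◦] = P` is
provable in LBV.
-/

/-!
The deep-inference system LBV (the `BV`-free core system of the calculus of
structures of Guglielmi).  Structures are built from the unit `◦`, atoms `a`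
and negated atoms `ā` by par `[P,Q]` and copar `(P,Q)`, and are identified
modulo the congruence generated by associativity, commutativity and the
unit laws `[P,◦]=P`, `(P,◦)=P`.  The rules `ai↓`, `s` (and the atomic cut
`ai↑`) apply inside an arbitrary one-hole context and modulo the
equivalence.
-/

namespace LBV

/-- Structures: the unit `◦`, atoms, negated atoms, par `[P,Q]` and
copar `(P,Q)`. -/
inductive St : Type where
  | unit : St
  | pos  : ℕ → St
  | neg  : ℕ → St
  | par  : St → St → St
  | cop  : St → St → St
deriving DecidableEq

/-- Negation: `¬◦ = ◦`, `¬[P,Q] = (¬P,¬Q)`, `¬(P,Q) = [¬P,¬Q]`, `¬¬P = P`. -/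
def St.negS : St → St
  | .unit => .unit
  | .pos a => .neg a
  | .neg a => .pos a
  | .par P Q => .cop P.negS Q.negS
  | .cop P Q => .par P.negS Q.negS

/-- Atoms are the propositional symbols and their negations. -/
def St.isAtom : St → Prop
  | .pos _ => True
  | .neg _ => True
  | _ => False

/-- Syntactic equivalence of structures: the smallest congruence generated
by associativity and commutativity of par and copar and the unit laws
`[P,◦]=P` and `(P,◦)=P`. -/
inductive Equiv : St → St → Prop where
  | refl (P : St) : Equiv P P
  | symm {P Q : St} : Equiv P Q → Equiv Q P
  | trans {P Q R : St} : Equiv P Q → Equiv Q R → Equiv P R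
  | parComm (P Q : St) : Equiv (.par P Q) (.par Q P)
  | copComm (P Q : St) : Equiv (.cop P Q) (.cop Q P)
  | parAssoc (P Q R : St) : Equiv (.par (.par P Q) R) (.par P (.par Q R))
  | copAssoc (P Q R : St) : Equiv (.cop (.cop P Q) R) (.cop P (.cop Q R))
  | parUnit (P : St) : Equiv (.par P .unit) P
  | copUnit (P : St) : Equiv (.cop P .unit) P
  | parCongr {P P' Q Q' : St} :
      Equiv P P' → Equiv Q Q' → Equiv (.par P Q) (.par P' Q')
  | copCongr {P P' Q Q' : St} :
      Equiv P P' → Equiv Q Q' → Equiv (.cop P Q) (.cop P' Q')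

/-- One-hole contexts. -/
inductive Ctx : Type where
  | hole : Ctx
  | parL : Ctx → St → Ctx
  | parR : St → Ctx → Ctx
  | copL : Ctx → St → Ctx
  | copR : St → Ctx → Ctx

/-- Plugging a structure into the hole of a context. -/
def Ctx.fill : Ctx → St → St
  | .hole, P => P
  | .parL C Q, P => .par (C.fill P) Q
  | .parR Q C, P => .par Q (C.fill P)
  | .copL C Q, P => .cop (C.fill P) Q
  | .copR Q C, P => .cop Q (C.fill P)

/-- Names of the rules: interaction `ai↓`, co-interaction (atomic cut)
`ai↑`, and switch `s`. -/
inductive Rule : Type where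
  | aiDown | aiUp | s
deriving DecidableEq

/-- The rules read at the root of a structure (premise on the left,
conclusion on the right). -/
inductive RootStep : Rule → St → St → Prop where
  | aiDown (A : St) (h : A.isAtom) : RootStep .aiDown .unit (.par A A.negS)
  | aiUp (A : St) (h : A.isAtom) : RootStep .aiUp (.cop A A.negS) .unit
  | s (P Q R : St) : RootStep .s (.cop P (.par Q R)) (.par (.cop P Q) R)

/-- One inference step using a rule from the set `Rs`, applied inside an
arbitrary context and modulo the equivalence. -/
def Step (Rs : Set Rule) (P Q : St) : Prop :=
  ∃ r ∈ Rs, ∃ (C : Ctx) (P' Q' : St),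
    RootStep r P' Q' ∧ Equiv P (C.fill P') ∧ Equiv (C.fill Q') Q

/-- Derivations over an arbitrary step relation: a finite sequence of rule
instances from the premise to the conclusion (modulo the equivalence). -/
inductive Deriv (Stp : St → St → Prop) : St → St → Prop where
  | eqv {P Q : St} : Equiv P Q → Deriv Stp P Q
  | step {P Q R : St} : Stp P Q → Deriv Stp Q R → Deriv Stp P R

/-- The rules of the system LBV. -/
def LBVRules : Set Rule := {.aiDown, .s}

/-- Derivations in LBV. -/
def DerivLBV (P Q : St) : Prop := Deriv (Step LBVRules) P Q

/-- A proof of `Q` in LBV is a derivation from the unit `◦` to `Q`. -/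
def ProofLBV (Q : St) : Prop := DerivLBV .unit Q

end LBV

namespace LBV

/-! ### Phase spaces -/

section Phase

open scoped Pointwise

variable {M : Type} [CommMonoid M] (B : Set M)

/-- The orthogonal of `X` in the phase space `(M, B)`. -/
def orth (X : Set M) : Set M := {q | ∀ p ∈ X, p * q ∈ B}

variable {B}

theorem orth_anti {X Y : Set M} (h : X ⊆ Y) : orth B Y ⊆ orth B X :=
  fun _ hq p hp => hq p (h hp)

theorem sub_orth_orth (X : Set M) : X ⊆ orth B (orth B X) := by
  intro p hp q hq
  rw [mul_comm]
  exact hq p hp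

theorem orth_orth_orth (X : Set M) : orth B (orth B (orth B X)) = orth B X :=
  (orth_anti (sub_orth_orth X)).antisymm (sub_orth_orth _)

theorem orth_orth_sub {X Y : Set M} (h : X ⊆ orth B Y) : orth B (orth B X) ⊆ orth B Y := by
  rw [← orth_orth_orth Y]
  exact orth_anti (orth_anti h)

/-- Taking the closure of a factor does not change the orthogonal of a product; this gives
associativity and the unit laws for both connectives. -/
theorem orth_closure_mul (X Z : Set M) : orth B (orth B (orth B X) * Z) = orth B (X * Z) := by
  apply (orth_anti (Set.mul_subset_mul_right (sub_orth_orth X))).antisymm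
  rintro q hq _ ⟨x, hx, z, hz, rfl⟩
  have hzq : z * q ∈ orth B X := fun p hp => by
    rw [← mul_assoc]
    exact hq _ ⟨p, hp, z, hz, rfl⟩
  show x * z * q ∈ B
  rw [mul_assoc, mul_comm]
  exact hx _ hzq

theorem orth_one : orth B {1} = B := by
  ext q
  simp [orth]

theorem orth_self (h1 : (1 : M) ∈ B) (hm : ∀ p ∈ B, ∀ q ∈ B, p * q ∈ B) : orth B B = B := by
  ext q
  constructor
  · intro hq
    simpa using hq 1 h1
  · intro hq p hp
    exact hm p hp q hq

/-- The interpretation of par in a phase space. -/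
def phasePar (B X Y : Set M) : Set M := orth B (orth B X * orth B Y)

/-- The interpretation of copar in a phase space. -/
def phaseCop (B X Y : Set M) : Set M := orth B (orth B (X * Y))

theorem phasePar_mono {X X' Y Y' : Set M} (hX : X ⊆ X') (hY : Y ⊆ Y') :
    phasePar B X Y ⊆ phasePar B X' Y' :=
  orth_anti (Set.mul_subset_mul (orth_anti hX) (orth_anti hY))

theorem phaseCop_mono {X X' Y Y' : Set M} (hX : X ⊆ X') (hY : Y ⊆ Y') :
    phaseCop B X Y ⊆ phaseCop B X' Y' :=
  orth_anti (orth_anti (Set.mul_subset_mul hX hY))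

theorem phasePar_comm (X Y : Set M) : phasePar B X Y = phasePar B Y X := by
  rw [phasePar, mul_comm, phasePar]

theorem phaseCop_comm (X Y : Set M) : phaseCop B X Y = phaseCop B Y X := by
  rw [phaseCop, mul_comm, phaseCop]

theorem phasePar_assoc (X Y Z : Set M) :
    phasePar B (phasePar B X Y) Z = phasePar B X (phasePar B Y Z) := by
  unfold phasePar
  rw [orth_closure_mul, mul_comm (orth B X) (orth B (orth B _)), orth_closure_mul,
    mul_assoc, mul_comm (orth B X)]

theorem phaseCop_assoc (X Y Z : Set M) :
    phaseCop B (phaseCop B X Y) Z = phaseCop B X (phaseCop B Y Z) := by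
  unfold phaseCop
  rw [orth_closure_mul, mul_comm X (orth B (orth B _)), orth_closure_mul,
    mul_assoc, mul_comm X]

theorem phasePar_unit {X : Set M} (hX : orth B (orth B X) = X) : phasePar B X B = X := by
  unfold phasePar
  nth_rw 4 [← orth_one (B := B)]
  rw [mul_comm, orth_closure_mul, Set.singleton_mul]
  simpa using hX

theorem phaseCop_unit (hB : orth B B = B) {X : Set M} (hX : orth B (orth B X) = X) :
    phaseCop B X B = X := by
  have h : orth B (X * B) = orth B X := by
    have h2 : orth B (orth B {1}) = B := by rw [orth_one, hB]
    have h3 := orth_closure_mul (B := B) {1} X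
    rw [h2, Set.singleton_mul] at h3
    rw [mul_comm, h3]
    simp
  rw [phaseCop, h, hX]

theorem phase_switch (X Y Z : Set M) :
    phaseCop B X (phasePar B Y Z) ⊆ phasePar B (phaseCop B X Y) Z := by
  unfold phaseCop phasePar
  rw [orth_orth_orth]
  apply orth_orth_sub
  rintro _ ⟨x, hx, w, hw, rfl⟩ _ ⟨u, hu, v, hv, rfl⟩
  have hxu : x * u ∈ orth B Y := fun y hy => by
    have := hu _ ⟨x, hx, y, hy, rfl⟩
    simpa only [mul_assoc, mul_left_comm, mul_comm] using this
  have := hw _ ⟨x * u, hxu, v, hv, rfl⟩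
  simpa only [mul_assoc, mul_left_comm, mul_comm] using this

theorem phase_ax (hm : ∀ p ∈ B, ∀ q ∈ B, p * q ∈ B) (X : Set M) :
    B ⊆ phasePar B X (orth B X) := by
  rintro b hb _ ⟨u, hu, v, hv, rfl⟩
  exact hm _ (hv u hu) _ hb

theorem phase_cut (X : Set M) : phaseCop B X (orth B X) ⊆ B := by
  have h : X * orth B X ⊆ orth B {1} := by
    rw [orth_one]
    rintro _ ⟨x, hx, y, hy, rfl⟩
    exact hy x hx
  simpa only [phaseCop, orth_one] using orth_orth_sub h

end Phase

/-! ### Basic properties of LBV derivations -/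

/-- Composition of contexts: `C.comp D` is `C{D{ }}`. -/
def Ctx.comp : Ctx → Ctx → Ctx
  | .hole, D => D
  | .parL C Q, D => .parL (C.comp D) Q
  | .parR Q C, D => .parR Q (C.comp D)
  | .copL C Q, D => .copL (C.comp D) Q
  | .copR Q C, D => .copR Q (C.comp D)

theorem Ctx.fill_comp (C D : Ctx) (P : St) : (C.comp D).fill P = C.fill (D.fill P) := by
  induction C <;> simp_all [Ctx.comp, Ctx.fill]

theorem Equiv.fill (C : Ctx) {P Q : St} (h : Equiv P Q) : Equiv (C.fill P) (C.fill Q) := by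
  induction C with
  | hole => exact h
  | parL C R ih => exact .parCongr ih (.refl _)
  | parR R C ih => exact .parCongr (.refl _) ih
  | copL C R ih => exact .copCongr ih (.refl _)
  | copR R C ih => exact .copCongr (.refl _) ih

theorem Step.equivLeft {Rs : Set Rule} {P Q R : St} (h : Equiv P Q) (hs : Step Rs Q R) :
    Step Rs P R := by
  obtain ⟨r, hr, C, P', Q', h1, h2, h3⟩ := hs
  exact ⟨r, hr, C, P', Q', h1, h.trans h2, h3⟩

theorem DerivLBV.trans {P Q R : St} (h : DerivLBV P Q) (h' : DerivLBV Q R) : DerivLBV P R := by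
  induction h with
  | eqv e =>
    cases h' with
    | eqv e' => exact .eqv (e.trans e')
    | step s d => exact .step (s.equivLeft e) d
  | step s _ ih => exact .step s (ih h')

theorem DerivLBV.fill (C : Ctx) {P Q : St} (h : DerivLBV P Q) :
    DerivLBV (C.fill P) (C.fill Q) := by
  induction h with
  | eqv e => exact .eqv (e.fill C)
  | step s _ ih =>
    obtain ⟨r, hr, D, P', Q', h1, h2, h3⟩ := s
    refine .step ⟨r, hr, C.comp D, P', Q', h1, ?_, ?_⟩ ih
    · rw [Ctx.fill_comp]; exact h2.fill C
    · rw [Ctx.fill_comp]; exact h3.fill C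

theorem DerivLBV.root {r : Rule} (hr : r ∈ LBVRules) {P Q : St} (h : RootStep r P Q) :
    DerivLBV P Q :=
  .step ⟨r, hr, .hole, P, Q, h, .refl _, .refl _⟩ (.eqv (.refl _))

theorem DerivLBV.switch (P Q R : St) : DerivLBV (.cop P (.par Q R)) (.par (.cop P Q) R) :=
  .root (by simp [LBVRules]) (.s P Q R)

theorem ProofLBV.equiv {P Q : St} (h : ProofLBV P) (e : Equiv P Q) : ProofLBV Q :=
  DerivLBV.trans h (.eqv e)

theorem ProofLBV.unit : ProofLBV .unit := .eqv (.refl _)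

theorem ProofLBV.par {P Q : St} (hP : ProofLBV P) (hQ : ProofLBV Q) : ProofLBV (.par P Q) :=
  DerivLBV.trans (ProofLBV.equiv hP (.symm (.parUnit P))) (DerivLBV.fill (.parR P .hole) hQ)

theorem ProofLBV.cop {P Q : St} (hP : ProofLBV P) (hQ : ProofLBV Q) : ProofLBV (.cop P Q) :=
  DerivLBV.trans (ProofLBV.equiv hP (.symm (.copUnit P))) (DerivLBV.fill (.copR P .hole) hQ)

/-- The sequent-style copar rule: it is derived by two switches. -/
theorem ProofLBV.tensor {P Q X Y : St} (hP : ProofLBV (.par P X)) (hQ : ProofLBV (.par Q Y)) :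
    ProofLBV (.par (.cop P Q) (.par X Y)) := by
  have h1 : ProofLBV (.par (.cop (.par P X) Q) Y) := DerivLBV.trans (hP.cop hQ) (.switch _ _ _)
  have h2 : DerivLBV (.cop (.par P X) Q) (.par (.cop P Q) X) :=
    DerivLBV.trans (.eqv (.copComm _ _))
      (DerivLBV.trans (.switch Q P X) (.eqv (.parCongr (.copComm _ _) (.refl _))))
  have h3 : ProofLBV (.par (.par (.cop P Q) X) Y) :=
    DerivLBV.trans h1 (DerivLBV.fill (.parL .hole Y) h2)
  exact h3.equiv (.parAssoc _ _ _)

/-! ### The syntactic phase space -/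

/-- Syntactic equivalence as a setoid. -/
def stSetoid : Setoid St := ⟨Equiv, .refl, .symm, .trans⟩

/-- Structures modulo syntactic equivalence. -/
def QSt : Type := Quotient stSetoid

/-- The equivalence class of a structure. -/
def QSt.mk (P : St) : QSt := Quotient.mk stSetoid P

/-- The monoid operation is par, and the unit is the class of `◦`. -/
instance : CommMonoid QSt where
  mul := Quotient.map₂ (sa := stSetoid) (sb := stSetoid) (sc := stSetoid) St.par
    (fun _ _ h _ _ h' => Equiv.parCongr h h')
  one := QSt.mk .unit
  mul_assoc := by
    rintro ⟨P⟩ ⟨Q⟩ ⟨R⟩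
    exact Quotient.sound (s := stSetoid) (Equiv.parAssoc P Q R)
  mul_comm := by
    rintro ⟨P⟩ ⟨Q⟩
    exact Quotient.sound (s := stSetoid) (Equiv.parComm P Q)
  mul_one := by
    rintro ⟨P⟩
    exact Quotient.sound (s := stSetoid) (Equiv.parUnit P)
  one_mul := by
    rintro ⟨P⟩
    exact Quotient.sound (s := stSetoid) ((Equiv.parComm _ _).trans (Equiv.parUnit P))

/-- The pole of the phase space: the classes of LBV-provable structures. -/
def pole : Set QSt := {q | ∃ P, QSt.mk P = q ∧ ProofLBV P}

theorem mk_mem_pole {P : St} : QSt.mk P ∈ pole ↔ ProofLBV P := by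
  constructor
  · rintro ⟨Q, e, h⟩
    exact h.equiv (Quotient.exact (s := stSetoid) e)
  · exact fun h => ⟨P, rfl, h⟩

theorem mk_mul (P Q : St) : QSt.mk P * QSt.mk Q = QSt.mk (.par P Q) := rfl

theorem one_mem_pole : (1 : QSt) ∈ pole := mk_mem_pole.2 .unit

theorem mul_mem_pole : ∀ p ∈ pole, ∀ q ∈ pole, p * q ∈ pole := by
  rintro _ ⟨P, rfl, hP⟩ _ ⟨Q, rfl, hQ⟩
  exact mk_mem_pole.2 (hP.par hQ)

/-- The interpretation of structures as closed sets of the syntactic phase space. -/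
def interp : St → Set QSt
  | .unit => pole
  | .pos a => orth pole {QSt.mk (.pos a)}
  | .neg a => orth pole (orth pole {QSt.mk (.pos a)})
  | .par P Q => phasePar pole (interp P) (interp Q)
  | .cop P Q => phaseCop pole (interp P) (interp Q)

theorem interp_closed (P : St) : orth pole (orth pole (interp P)) = interp P := by
  cases P with
  | unit => simp only [interp, orth_self one_mem_pole mul_mem_pole]
  | _ => exact orth_orth_orth _

/-! ### Soundness -/

theorem interp_equiv {P Q : St} (h : Equiv P Q) : interp P = interp Q := by
  induction h with
  | refl P => rfl
  | symm _ ih => exact ih.symm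
  | trans _ _ ih₁ ih₂ => exact ih₁.trans ih₂
  | parComm P Q => exact phasePar_comm _ _
  | copComm P Q => exact phaseCop_comm _ _
  | parAssoc P Q R => exact phasePar_assoc _ _ _
  | copAssoc P Q R => exact phaseCop_assoc _ _ _
  | parUnit P => exact phasePar_unit (interp_closed P)
  | copUnit P => exact phaseCop_unit (orth_self one_mem_pole mul_mem_pole) (interp_closed P)
  | parCongr _ _ ih₁ ih₂ => simp only [interp, ih₁, ih₂]
  | copCongr _ _ ih₁ ih₂ => simp only [interp, ih₁, ih₂]

theorem interp_neg_atom {A : St} (h : A.isAtom) : interp A.negS = orth pole (interp A) := by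
  cases A with
  | pos a => rfl
  | neg a => exact (orth_orth_orth _).symm
  | _ => exact h.elim

theorem interp_root {r : Rule} {P Q : St} (h : RootStep r P Q) : interp P ⊆ interp Q := by
  cases h with
  | aiDown A hA =>
    simp only [interp, interp_neg_atom hA]
    exact phase_ax mul_mem_pole _
  | aiUp A hA =>
    simp only [interp, interp_neg_atom hA]
    exact phase_cut _
  | s P Q R => exact phase_switch _ _ _

theorem interp_fill (C : Ctx) {P Q : St} (h : interp P ⊆ interp Q) :
    interp (C.fill P) ⊆ interp (C.fill Q) := by
  induction C with
  | hole => exact h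
  | parL C R ih => exact phasePar_mono ih subset_rfl
  | parR R C ih => exact phasePar_mono subset_rfl ih
  | copL C R ih => exact phaseCop_mono ih subset_rfl
  | copR R C ih => exact phaseCop_mono subset_rfl ih

/-- Derivations are sound for the phase semantics whatever rules they use, cut included. -/
theorem interp_deriv {Rs : Set Rule} {P Q : St} (h : Deriv (Step Rs) P Q) :
    interp P ⊆ interp Q := by
  induction h with
  | eqv e => exact (interp_equiv e).subset
  | step s _ ih =>
    obtain ⟨r, _, C, P', Q', h1, h2, h3⟩ := s
    refine subset_trans ?_ ih
    rw [interp_equiv h2, ← interp_equiv h3]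
    exact interp_fill C (interp_root h1)

/-! ### Completeness -/

theorem mem_orth_of_sub {X : Set QSt} {p : QSt} (h : X ⊆ orth pole {p}) : p ∈ orth pole X := by
  intro x hx
  rw [mul_comm]
  exact h hx p rfl

/-- Every element of the interpretation of `P` is a context in which `P` is cut-free provable. -/
theorem interp_sub (P : St) : interp P ⊆ orth pole {QSt.mk P} := by
  induction P with
  | unit => exact (orth_one (B := pole)).symm.subset
  | pos a => exact subset_rfl
  | neg a =>
    apply orth_anti
    rintro _ rfl _ rfl
    exact mk_mem_pole.2 (.root (by simp [LBVRules]) (.aiDown (.pos a) trivial))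
  | par P Q ihP ihQ =>
    apply orth_anti
    rintro _ rfl
    exact ⟨_, mem_orth_of_sub ihP, _, mem_orth_of_sub ihQ, rfl⟩
  | cop P Q ihP ihQ =>
    apply orth_orth_sub
    rintro _ ⟨⟨x⟩, hx, ⟨y⟩, hy, rfl⟩ _ rfl
    exact mk_mem_pole.2 (.tensor (mk_mem_pole.1 (ihP hx _ rfl)) (mk_mem_pole.1 (ihQ hy _ rfl)))

/-- Cut elimination for LBV.
The atomic cut rule `ai↑` is admissible in LBV: every structure provable in
LBV ∪ {ai↑} is provable in LBV. -/
theorem lbv_cut_elimination (P : St)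
    (h : Deriv (Step {Rule.aiDown, Rule.s, Rule.aiUp}) .unit P) :
    ProofLBV P := by
  have h1 : (1 : QSt) ∈ interp P := interp_deriv h one_mem_pole
  have h2 := interp_sub P h1 _ rfl
  rw [mul_one] at h2
  exact mk_mem_pole.1 h2

end LBV
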